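/- Assume M : ℝ^d → ℝ is positive, twice continuously differentiable, satisfies C₁⟨v⟩^{−γ} ≤ M(v) ≤ C₂⟨v⟩^{−γ} for all v with γ > d/2, and |ΔM(v)/M(v)| ≤ C⟨v⟩^{−σ} for all v, for some σ ≥ 2 and C > 0. Let m : ℝ^d∖{0} → ℝ be twice continuously differentiable and suppose that for every s ≠ 0, λ^{−γ} M(λ^{−1}s) → m(s) as λ → 0⁺. For η > 0 define m_η(s) := η^{−γ/3} M(η^{−1/3} s). Then for every compact set Ω ⊂ ℝ^d∖{0}, ∫_Ω ( |m_η(s) − m(s)|² + |∇m_η(s) − ∇m(s)|² ) ds → 0 as η → 0⁺; that is, m_η converges to m in H¹(Ω). -/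

import Mathlib

open MeasureTheory Real Filter

noncomputable section

/-- The Laplacian on `ℝ^d`, as the sum of the second partial derivatives. -/
def lap {d : ℕ} (f : EuclideanSpace ℝ (Fin d) → ℝ) (v : EuclideanSpace ℝ (Fin d)) : ℝ :=
  ∑ i : Fin d, fderiv ℝ (fun w => fderiv ℝ f w (EuclideanSpace.single i (1 : ℝ))) v
    (EuclideanSpace.single i (1 : ℝ))

/-!
The identity `Δ (w ^ 2) = 2 * (w * Δ w + ‖∇ w‖ ^ 2)`, multiplied by a smooth cutoff `χ` and
integrated by parts twice, turns local energy into terms without first derivatives: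
`∫ χ ‖∇ w‖ ^ 2 = (∫ Δ χ * w ^ 2) / 2 - ∫ χ * w * Δ w`. Hence, if `w` and `Δ w` stay bounded on
compact subsets of an open set and `w → 0` pointwise there, dominated convergence gives `w → 0` in
`H¹` on compact subsets. For `w = m_η - m` these bounds hold away from the origin because decay
like `‖v‖ ^ (-p)` at infinity is invariant under the rescaling: the bounds on `M` and `Δ M / M`
give `M = O(‖v‖ ^ (-γ))` and `Δ M = O(‖v‖ ^ (-(γ + 2)))`, and the Laplacian of the rescaling of `M`
with exponent `γ` is the rescaling of `Δ M` with exponent `γ + 2`.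
-/

open Set Asymptotics Bornology Topology
open scoped ContDiff Laplacian

section Fderiv

variable {E F : Type*} [NormedAddCommGroup E] [NormedSpace ℝ E] [NormedAddCommGroup F]
  [NormedSpace ℝ F] {f : E → F}

theorem differentiableAt_fderiv {x : E} (hf : ContDiffAt ℝ 2 f x) :
    DifferentiableAt ℝ (fderiv ℝ f) x :=
  (hf.fderiv_right (m := 1) (by norm_num)).differentiableAt one_ne_zero

theorem continuousOn_fderiv_apply {s : Set E} (hf : ∀ x ∈ s, ContDiffAt ℝ 1 f x) (v : E) :
    ContinuousOn (fderiv ℝ f · v) s := fun x hx ↦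
  (((hf x hx).fderiv_right (m := 0) (by norm_num)).continuousAt.clm_apply
    continuousAt_const).continuousWithinAt

end Fderiv

theorem integrable_mul_of_continuousOn {X : Type*} [TopologicalSpace X] [T2Space X]
    [MeasurableSpace X] [OpensMeasurableSpace X] {μ : Measure X} [IsFiniteMeasureOnCompacts μ]
    {f g : X → ℝ} {K : Set X} (hK : IsCompact K) (hf : ContinuousOn f K) (hg : ContinuousOn g K)
    (hsupp : Function.support f ⊆ K) : Integrable (fun x ↦ f x * g x) μ :=
  (integrableOn_iff_integrable_of_support_subset
    ((Function.support_mul_subset_left f g).trans hsupp)).1 ((hf.mul hg).integrableOn_compact hK)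

section Laplacian

variable {E F : Type*} [NormedAddCommGroup E] [InnerProductSpace ℝ E] [FiniteDimensional ℝ E]
  [NormedAddCommGroup F] [NormedSpace ℝ F] {x : E}

theorem laplacian_eq_sum_fderiv_fderiv {ι : Type*} [Fintype ι] {f : E → F}
    (hf : DifferentiableAt ℝ (fderiv ℝ f) x) (b : OrthonormalBasis ι ℝ E) :
    Δ f x = ∑ i, fderiv ℝ (fun y ↦ fderiv ℝ f y (b i)) x (b i) := by
  rw [InnerProductSpace.laplacian_eq_iteratedFDeriv_orthonormalBasis f b]
  refine Finset.sum_congr rfl fun i _ ↦ ?_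
  rw [iteratedFDeriv_two_apply, fderiv_clm_apply hf (differentiableAt_const _)]
  simp

theorem lap_eq_laplacian {d : ℕ} {f : EuclideanSpace ℝ (Fin d) → ℝ}
    (hf : ContDiff ℝ 2 f) : lap f = Δ f := by
  ext v
  simp [lap, laplacian_eq_sum_fderiv_fderiv (differentiableAt_fderiv hf.contDiffAt)
    (EuclideanSpace.basisFun (Fin d) ℝ)]

theorem continuousAt_laplacian {f : E → F} (hf : ContDiffAt ℝ 2 f x) :
    ContinuousAt (Δ f) x := by
  rw [InnerProductSpace.laplacian_eq_iteratedFDeriv_stdOrthonormalBasis]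
  have hcont := hf.continuousAt_iteratedFDeriv (k := 2) le_rfl
  exact tendsto_finsetSum _ fun i _ ↦ (continuous_eval_const _).continuousAt.comp hcont

theorem tsupport_laplacian_subset {f : E → F} : tsupport (Δ f) ⊆ tsupport f := by
  refine closure_minimal (fun y hy ↦ by_contra fun hyf ↦ hy ?_) isClosed_closure
  simp [InnerProductSpace.laplacian_eq_iteratedFDeriv_stdOrthonormalBasis,
    image_eq_zero_of_notMem_tsupport fun h ↦ hyf (tsupport_iteratedFDeriv_subset 2 h)]

theorem laplacian_comp_const_smul {f : E → F} (hf : ContDiff ℝ 2 f) (c : ℝ) (x : E) :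
    Δ (fun y ↦ f (c • y)) x = c ^ 2 • Δ f (c • x) := by
  simp [InnerProductSpace.laplacian_eq_iteratedFDeriv_stdOrthonormalBasis,
    iteratedFDeriv_comp_const_smul (i := 2) c hf, Finset.smul_sum]

theorem laplacian_sq {f : E → ℝ} (hf : ContDiffAt ℝ 2 f x) :
    Δ (fun y ↦ f y ^ 2) x = 2 * (f x * Δ f x + ‖fderiv ℝ f x‖ ^ 2) := by
  let b := stdOrthonormalBasis ℝ E
  have hd : DifferentiableAt ℝ f x := hf.differentiableAt two_ne_zero
  have hsecond (v : E) : fderiv ℝ (fun y ↦ fderiv ℝ (fun z ↦ f z ^ 2) y v) x v =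
      2 * (f x * fderiv ℝ (fun y ↦ fderiv ℝ f y v) x v + fderiv ℝ f x v ^ 2) := by
    have hfirst : (fun y ↦ fderiv ℝ (fun z ↦ f z ^ 2) y v) =ᶠ[𝓝 x]
        fun y ↦ 2 * (f y * fderiv ℝ f y v) := by
      filter_upwards [hf.eventually (by simp)] with y hy
      rw [fderiv_fun_pow 2 (hy.differentiableAt two_ne_zero)]
      simp [mul_assoc]
    have hdv : DifferentiableAt ℝ (fun y ↦ fderiv ℝ f y v) x :=
      (differentiableAt_fderiv hf).clm_apply (differentiableAt_const v)
    rw [hfirst.fderiv_eq, fderiv_const_mul (hd.fun_mul hdv), fderiv_fun_mul hd hdv]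
    simp only [FunLike.coe_add, FunLike.coe_smul, Pi.add_apply, Pi.smul_apply, smul_eq_mul]
    ring
  rw [laplacian_eq_sum_fderiv_fderiv (differentiableAt_fderiv (hf.pow 2)) b,
    laplacian_eq_sum_fderiv_fderiv (differentiableAt_fderiv hf) b, b.norm_dual]
  simp only [hsecond, ← Finset.mul_sum, Finset.sum_add_distrib]

end Laplacian

section Green

variable {E : Type*} [NormedAddCommGroup E] [InnerProductSpace ℝ E] [FiniteDimensional ℝ E]
  [MeasurableSpace E] [BorelSpace E] {μ : Measure E} [μ.IsAddHaarMeasure] {χ g w : E → ℝ}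

theorem integral_mul_fderiv_eq_neg_of_hasCompactSupport (hχ : ContDiff ℝ 1 χ)
    (hc : HasCompactSupport χ) (hg : ∀ x ∈ tsupport χ, ContDiffAt ℝ 1 g x) (v : E) :
    ∫ x, χ x * fderiv ℝ g x v ∂μ = -∫ x, fderiv ℝ χ x v * g x ∂μ := by
  have hgc : ContinuousOn g (tsupport χ) := fun x hx ↦ (hg x hx).continuousAt.continuousWithinAt
  exact integral_mul_fderiv_eq_neg_fderiv_mul_of_integrable
    (integrable_mul_of_continuousOn hc
      (continuousOn_fderiv_apply (fun _ _ ↦ hχ.contDiffAt) v) hgc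
      (subset_closure.trans (tsupport_fderiv_apply_subset ℝ v)))
    (integrable_mul_of_continuousOn hc hχ.continuous.continuousOn
      (continuousOn_fderiv_apply hg v) subset_closure)
    (integrable_mul_of_continuousOn hc hχ.continuous.continuousOn hgc subset_closure)
    (fun x _ ↦ hχ.differentiable one_ne_zero x)
    (fun x hx ↦ (hg x hx).differentiableAt one_ne_zero)

theorem integral_mul_laplacian_eq_integral_laplacian_mul (hχ : ContDiff ℝ 2 χ)
    (hc : HasCompactSupport χ) (hg : ∀ x ∈ tsupport χ, ContDiffAt ℝ 2 g x) :
    ∫ x, χ x * Δ g x ∂μ = ∫ x, Δ χ x * g x ∂μ := by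
  let b := stdOrthonormalBasis ℝ E
  have hχ' (v : E) : ContDiff ℝ 1 (fderiv ℝ χ · v) :=
    (hχ.fderiv_right (by norm_num)).clm_apply contDiff_const
  have hg' (v : E) : ∀ x ∈ tsupport χ, ContDiffAt ℝ 1 (fderiv ℝ g · v) x := fun x hx ↦
    ((hg x hx).fderiv_right (by norm_num)).clm_apply contDiffAt_const
  have hsecond (v : E) : ∫ x, χ x * fderiv ℝ (fderiv ℝ g · v) x v ∂μ =
      ∫ x, fderiv ℝ (fderiv ℝ χ · v) x v * g x ∂μ := by
    rw [integral_mul_fderiv_eq_neg_of_hasCompactSupport (hχ.of_le one_le_two) hc (hg' v),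
      integral_mul_fderiv_eq_neg_of_hasCompactSupport (hχ' v) (hc.fderiv_apply (𝕜 := ℝ) v)
        (fun x hx ↦ (hg x (tsupport_fderiv_apply_subset ℝ v hx)).of_le one_le_two), neg_neg]
  have hleft : (fun x ↦ χ x * Δ g x) =
      fun x ↦ ∑ i, χ x * fderiv ℝ (fderiv ℝ g · (b i)) x (b i) := by
    ext x
    by_cases hx : x ∈ tsupport χ
    · rw [laplacian_eq_sum_fderiv_fderiv (differentiableAt_fderiv (hg x hx)) b, Finset.mul_sum]
    · simp [image_eq_zero_of_notMem_tsupport hx]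
  have hright : (fun x ↦ Δ χ x * g x) =
      fun x ↦ ∑ i, fderiv ℝ (fderiv ℝ χ · (b i)) x (b i) * g x := by
    ext x
    rw [laplacian_eq_sum_fderiv_fderiv (differentiableAt_fderiv hχ.contDiffAt) b, Finset.sum_mul]
  rw [hleft, hright, integral_finsetSum, integral_finsetSum]
  · exact Finset.sum_congr rfl fun i _ ↦ hsecond (b i)
  · exact fun i _ ↦ integrable_mul_of_continuousOn hc
      (continuousOn_fderiv_apply (fun x _ ↦ (hχ' (b i)).contDiffAt) (b i))
      (fun x hx ↦ (hg x hx).continuousAt.continuousWithinAt)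
      (subset_closure.trans ((tsupport_fderiv_apply_subset ℝ (b i)).trans
        (tsupport_fderiv_apply_subset ℝ (b i))))
  · exact fun i _ ↦ integrable_mul_of_continuousOn hc hχ.continuous.continuousOn
      (continuousOn_fderiv_apply (hg' (b i)) (b i)) subset_closure

theorem integral_mul_norm_fderiv_sq (hχ : ContDiff ℝ 2 χ) (hc : HasCompactSupport χ)
    (hw : ∀ x ∈ tsupport χ, ContDiffAt ℝ 2 w x) :
    ∫ x, χ x * ‖fderiv ℝ w x‖ ^ 2 ∂μ =
      (∫ x, Δ χ x * w x ^ 2 ∂μ) / 2 - ∫ x, χ x * (w x * Δ w x) ∂μ := by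
  have hwc : ContinuousOn w (tsupport χ) := fun x hx ↦ (hw x hx).continuousAt.continuousWithinAt
  have hΔwc : ContinuousOn (Δ w) (tsupport χ) := fun x hx ↦
    (continuousAt_laplacian (hw x hx)).continuousWithinAt
  have hw2 : ∀ x ∈ tsupport χ, ContDiffAt ℝ 2 (fun y ↦ w y ^ 2) x := fun x hx ↦ (hw x hx).pow 2
  have hpointwise (x : E) : χ x * ‖fderiv ℝ w x‖ ^ 2 =
      χ x * Δ (fun y ↦ w y ^ 2) x / 2 - χ x * (w x * Δ w x) := by
    by_cases hx : x ∈ tsupport χ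
    · rw [laplacian_sq (hw x hx)]
      ring
    · simp [image_eq_zero_of_notMem_tsupport hx]
  simp only [hpointwise]
  rw [integral_sub, integral_div, integral_mul_laplacian_eq_integral_laplacian_mul hχ hc hw2]
  · exact (integrable_mul_of_continuousOn hc hχ.continuous.continuousOn (fun x hx ↦
      (continuousAt_laplacian (hw2 x hx)).continuousWithinAt) subset_closure).div_const 2
  · exact integrable_mul_of_continuousOn hc hχ.continuous.continuousOn (hwc.mul hΔwc)
      subset_closure

theorem integral_mul_sq_add_norm_fderiv_sq (hχ : ContDiff ℝ 2 χ) (hc : HasCompactSupport χ)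
    (hw : ∀ x ∈ tsupport χ, ContDiffAt ℝ 2 w x) :
    ∫ x, χ x * (w x ^ 2 + ‖fderiv ℝ w x‖ ^ 2) ∂μ =
      (∫ x, χ x * w x ^ 2 ∂μ) +
        ((∫ x, Δ χ x * w x ^ 2 ∂μ) / 2 - ∫ x, χ x * (w x * Δ w x) ∂μ) := by
  simp only [mul_add]
  rw [← integral_mul_norm_fderiv_sq hχ hc hw, integral_add]
  · exact integrable_mul_of_continuousOn hc hχ.continuous.continuousOn (fun x hx ↦
      ((hw x hx).continuousAt.pow 2).continuousWithinAt) subset_closure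
  · exact integrable_mul_of_continuousOn hc hχ.continuous.continuousOn (fun x hx ↦
      (((hw x hx).continuousAt_fderiv two_ne_zero).norm.pow 2).continuousWithinAt) subset_closure

end Green

section BoundedOnCompacts

variable {ι E : Type*} [TopologicalSpace E] {l : Filter ι} {U : Set E} {v w : ι → E → ℝ}

/-- The family `w i` is bounded, uniformly for `i` eventually along `l`, on every compact subset
of `U`. The product filter `l ×ˢ 𝓟 K` encodes a bound that is uniform in the second variable. -/
def EventuallyBoundedOnCompacts (w : ι → E → ℝ) (l : Filter ι) (U : Set E) : Prop :=
  ∀ K ⊆ U, IsCompact K → (fun p : ι × E ↦ w p.1 p.2) =O[l ×ˢ 𝓟 K] (fun _ ↦ (1 : ℝ))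

namespace EventuallyBoundedOnCompacts

theorem of_continuousOn {f : E → ℝ} (hf : ContinuousOn f U) :
    EventuallyBoundedOnCompacts (fun _ : ι ↦ f) l U := fun K hKU hK ↦ by
  have hbound : f =O[𝓟 K] (fun _ ↦ (1 : ℝ)) :=
    (hf.mono hKU).isBigO_principal hK (by simp)
  exact hbound.comp_tendsto tendsto_snd

theorem congr (hv : EventuallyBoundedOnCompacts v l U) (h : ∀ᶠ i in l, EqOn (v i) (w i) U) :
    EventuallyBoundedOnCompacts w l U := fun K hKU hK ↦
  (hv K hKU hK).congr' (eventually_prod_principal_iff.2 (h.mono fun _ hi _ hx ↦ hi (hKU hx)))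
    .rfl

theorem sub (hv : EventuallyBoundedOnCompacts v l U) (hw : EventuallyBoundedOnCompacts w l U) :
    EventuallyBoundedOnCompacts (fun i x ↦ v i x - w i x) l U := fun K hKU hK ↦
  (hv K hKU hK).sub (hw K hKU hK)

theorem mul (hv : EventuallyBoundedOnCompacts v l U) (hw : EventuallyBoundedOnCompacts w l U) :
    EventuallyBoundedOnCompacts (fun i x ↦ v i x * w i x) l U := fun K hKU hK ↦ by
  simpa using (hv K hKU hK).mul (hw K hKU hK)

theorem exists_bound (hw : EventuallyBoundedOnCompacts w l U) {K : Set E} (hKU : K ⊆ U)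
    (hK : IsCompact K) : ∃ B, ∀ᶠ i in l, ∀ x ∈ K, |w i x| ≤ B := by
  obtain ⟨B, hB⟩ := (hw K hKU hK).bound
  exact ⟨B, by simpa using eventually_prod_principal_iff.1 hB⟩

theorem tendsto_integral_mul [T2Space E] [MeasurableSpace E] [OpensMeasurableSpace E]
    {μ : Measure E} [IsFiniteMeasureOnCompacts μ] [l.IsCountablyGenerated] {φ : E → ℝ}
    (hw : EventuallyBoundedOnCompacts w l U) (hφ : Continuous φ) (hc : HasCompactSupport φ)
    (hφU : tsupport φ ⊆ U) (hcont : ∀ i, ContinuousOn (w i) U)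
    (hlim : ∀ x ∈ U, Tendsto (w · x) l (𝓝 0)) :
    Tendsto (fun i ↦ ∫ x, φ x * w i x ∂μ) l (𝓝 0) := by
  obtain ⟨B, hB⟩ := hw.exists_bound hφU hc
  have hmeas (i : ι) : AEStronglyMeasurable (fun x ↦ φ x * w i x) μ :=
    (integrable_mul_of_continuousOn hc hφ.continuousOn ((hcont i).mono hφU)
      subset_closure).aestronglyMeasurable
  have hbound : ∀ᶠ i in l, ∀ᵐ x ∂μ, ‖φ x * w i x‖ ≤ ‖φ x‖ * B := by
    filter_upwards [hB] with i hi
    refine .of_forall fun x ↦ ?_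
    by_cases hx : x ∈ tsupport φ
    · grw [norm_mul, Real.norm_eq_abs (w i x), hi x hx]
    · simp [image_eq_zero_of_notMem_tsupport hx]
  have hpointwise (x : E) : Tendsto (fun i ↦ φ x * w i x) l (𝓝 0) := by
    by_cases hx : x ∈ tsupport φ
    · simpa using (hlim x (hφU hx)).const_mul (φ x)
    · simpa [image_eq_zero_of_notMem_tsupport hx] using tendsto_const_nhds
  simpa using tendsto_integral_filter_of_dominated_convergence (fun x ↦ ‖φ x‖ * B)
    (.of_forall hmeas) hbound ((hφ.integrable_of_hasCompactSupport hc).norm.mul_const B)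
    (.of_forall hpointwise)

end EventuallyBoundedOnCompacts

end BoundedOnCompacts

theorem exists_contDiff_cutoff {E : Type*} [NormedAddCommGroup E] [NormedSpace ℝ E]
    [FiniteDimensional ℝ E] {K U : Set E} (hK : IsCompact K) (hU : IsOpen U) (hKU : K ⊆ U) :
    ∃ χ : E → ℝ, ContDiff ℝ ∞ χ ∧ HasCompactSupport χ ∧ tsupport χ ⊆ U ∧ EqOn χ 1 K ∧ 0 ≤ χ := by
  obtain ⟨L, hL, hKL, hLU⟩ := exists_compact_between hK hU hKU
  obtain ⟨χ, hone, hzero, hIcc⟩ := exists_contMDiffMap_one_nhds_of_subset_interior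
    (n := ⊤) (modelWithCornersSelf ℝ E) hK.isClosed hKL
  have hsupp : tsupport χ ⊆ L := closure_minimal
    (fun x hx ↦ by_contra fun hxL ↦ hx (hzero x hxL)) hL.isClosed
  exact ⟨χ, χ.contMDiff.contDiff, hL.of_isClosed_subset isClosed_closure hsupp,
    hsupp.trans hLU, fun x hx ↦ hone.self_of_nhdsSet x hx, fun x ↦ (hIcc x).1⟩

section Convergence

variable {ι E : Type*} [NormedAddCommGroup E] [InnerProductSpace ℝ E] [FiniteDimensional ℝ E]
  [MeasurableSpace E] [BorelSpace E] {μ : Measure E} [μ.IsAddHaarMeasure] {l : Filter ι}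
  [l.IsCountablyGenerated] {U K : Set E}

theorem tendsto_integral_mul_sq_add_norm_fderiv_sq {χ : E → ℝ} {w : ι → E → ℝ}
    (hχ : ContDiff ℝ 2 χ) (hc : HasCompactSupport χ) (hU : IsOpen U) (hχU : tsupport χ ⊆ U)
    (hw : ∀ i, ContDiffOn ℝ 2 (w i) U) (hwb : EventuallyBoundedOnCompacts w l U)
    (hΔb : EventuallyBoundedOnCompacts (fun i ↦ Δ (w i)) l U)
    (hlim : ∀ x ∈ U, Tendsto (w · x) l (𝓝 0)) :
    Tendsto (fun i ↦ ∫ x, χ x * (w i x ^ 2 + ‖fderiv ℝ (w i) x‖ ^ 2) ∂μ) l (𝓝 0) := by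
  have hat (i : ι) {x : E} (hx : x ∈ U) : ContDiffAt ℝ 2 (w i) x :=
    (hw i).contDiffAt (hU.mem_nhds hx)
  have hΔcont (i : ι) : ContinuousOn (Δ (w i)) U := fun x hx ↦
    (continuousAt_laplacian (hat i hx)).continuousWithinAt
  have hsq (φ : E → ℝ) (hφ : Continuous φ) (hφc : HasCompactSupport φ) (hφU : tsupport φ ⊆ U) :
      Tendsto (fun i ↦ ∫ x, φ x * w i x ^ 2 ∂μ) l (𝓝 0) := by
    simp only [pow_two]
    exact (hwb.mul hwb).tendsto_integral_mul hφ hφc hφU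
      (fun i ↦ (hw i).continuousOn.mul (hw i).continuousOn)
      (fun x hx ↦ by simpa using (hlim x hx).mul (hlim x hx))
  have hΔχcont : Continuous (Δ χ) :=
    continuous_iff_continuousAt.2 fun x ↦ continuousAt_laplacian hχ.contDiffAt
  have hΔχ : tsupport (Δ χ) ⊆ tsupport χ := tsupport_laplacian_subset
  have hmulΔ : Tendsto (fun i ↦ ∫ x, χ x * (w i x * Δ (w i) x) ∂μ) l (𝓝 0) := by
    refine (hwb.mul hΔb).tendsto_integral_mul hχ.continuous hc hχU
      (fun i ↦ (hw i).continuousOn.mul (hΔcont i)) fun x hx ↦ ?_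
    obtain ⟨B, hB⟩ := hΔb.exists_bound (singleton_subset_iff.2 hx) isCompact_singleton
    exact (hlim x hx).zero_mul_isBoundedUnder_le
      ⟨B, eventually_map.2 (hB.mono fun i hi ↦ hi x rfl)⟩
  have hsplit (i : ι) := integral_mul_sq_add_norm_fderiv_sq (μ := μ) hχ hc
    fun x hx ↦ hat i (hχU hx)
  simpa [hsplit] using (hsq χ hχ.continuous hc hχU).add
    (((hsq (Δ χ) hΔχcont (hc.mono' (subset_closure.trans hΔχ)) (hΔχ.trans hχU)).div_const 2).sub
      hmulΔ)

theorem tendsto_setIntegral_sq_add_norm_fderiv_sq {w : ι → E → ℝ} (hU : IsOpen U) (hKU : K ⊆ U)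
    (hK : IsCompact K) (hw : ∀ i, ContDiffOn ℝ 2 (w i) U)
    (hwb : EventuallyBoundedOnCompacts w l U)
    (hΔb : EventuallyBoundedOnCompacts (fun i ↦ Δ (w i)) l U)
    (hlim : ∀ x ∈ U, Tendsto (w · x) l (𝓝 0)) :
    Tendsto (fun i ↦ ∫ x in K, (w i x ^ 2 + ‖fderiv ℝ (w i) x‖ ^ 2) ∂μ) l (𝓝 0) := by
  obtain ⟨χ, hχ, hc, hχU, hone, hnonneg⟩ := exists_contDiff_cutoff hK hU hKU
  have hχ2 : ContDiff ℝ 2 χ := hχ.of_le ENat.LEInfty.out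
  refine squeeze_zero (fun i ↦ by positivity) (fun i ↦ ?_)
    (tendsto_integral_mul_sq_add_norm_fderiv_sq (μ := μ) hχ2 hc hU hχU hw hwb hΔb hlim)
  let e : E → ℝ := fun x ↦ w i x ^ 2 + ‖fderiv ℝ (w i) x‖ ^ 2
  have hecont : ContinuousOn e U :=
    ((hw i).continuousOn.pow 2).add
      (((hw i).continuousOn_fderiv_of_isOpen hU one_le_two).norm.pow 2)
  have hint : Integrable (fun x ↦ χ x * e x) μ :=
    integrable_mul_of_continuousOn hc hχ.continuous.continuousOn (hecont.mono hχU) subset_closure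
  calc ∫ x in K, e x ∂μ = ∫ x in K, χ x * e x ∂μ :=
        setIntegral_congr_fun hK.measurableSet fun x hx ↦ by simp [hone hx]
    _ ≤ ∫ x, χ x * e x ∂μ :=
        setIntegral_le_integral hint (.of_forall fun x ↦ mul_nonneg (hnonneg x) (by positivity))

/-- The squared `H¹(K)`-distance `∫_K (|f - g|² + |∇f - ∇g|²) dμ`. The gradients are encoded by
Fréchet derivatives with the operator norm, which is the Euclidean norm of the gradient. -/
def sqH1Dist (μ : Measure E) (K : Set E) (f g : E → ℝ) : ℝ :=
  ∫ x in K, ((f x - g x) ^ 2 + ‖fderiv ℝ f x - fderiv ℝ g x‖ ^ 2) ∂μ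

theorem tendsto_sqH1Dist {u : ι → E → ℝ} {m : E → ℝ} (hU : IsOpen U) (hKU : K ⊆ U)
    (hK : IsCompact K) (hu : ∀ i, ContDiffOn ℝ 2 (u i) U) (hm : ContDiffOn ℝ 2 m U)
    (hub : EventuallyBoundedOnCompacts u l U)
    (hΔb : EventuallyBoundedOnCompacts (fun i ↦ Δ (u i)) l U)
    (hlim : ∀ x ∈ U, Tendsto (u · x) l (𝓝 (m x))) :
    Tendsto (fun i ↦ sqH1Dist μ K (u i) m) l (𝓝 0) := by
  have huat (i : ι) {x : E} (hx : x ∈ U) : ContDiffAt ℝ 2 (u i) x :=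
    (hu i).contDiffAt (hU.mem_nhds hx)
  have hmat {x : E} (hx : x ∈ U) : ContDiffAt ℝ 2 m x := hm.contDiffAt (hU.mem_nhds hx)
  have hΔsub (i : ι) : EqOn (fun x ↦ Δ (u i) x - Δ m x) (Δ (u i - m)) U := fun x hx ↦
    ((huat i hx).laplacian_sub (hmat hx)).symm
  have hΔm : ContinuousOn (Δ m) U := fun x hx ↦
    (continuousAt_laplacian (hmat hx)).continuousWithinAt
  refine (tendsto_setIntegral_sq_add_norm_fderiv_sq (w := fun i ↦ u i - m) (μ := μ) hU hKU hK
    (fun i ↦ (hu i).sub hm) (hub.sub (.of_continuousOn hm.continuousOn))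
    ((hΔb.sub (.of_continuousOn hΔm)).congr (.of_forall hΔsub))
    (fun x hx ↦ by simpa using (hlim x hx).sub_const (m x))).congr fun i ↦ ?_
  refine setIntegral_congr_fun hK.measurableSet fun x hx ↦ ?_
  rw [Pi.sub_apply, fderiv_sub ((huat i (hKU hx)).differentiableAt two_ne_zero)
    ((hmat (hKU hx)).differentiableAt two_ne_zero)]

end Convergence

theorem tendsto_rpow_nhdsGT_zero {r : ℝ} (hr : 0 < r) :
    Tendsto (fun x : ℝ ↦ x ^ r) (𝓝[>] 0) (𝓝[>] 0) := by
  refine tendsto_nhdsWithin_iff.2 ⟨?_, ?_⟩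
  · simpa [zero_rpow hr.ne'] using
      ((continuous_rpow_const hr.le).tendsto 0).mono_left nhdsWithin_le_nhds
  · filter_upwards [self_mem_nhdsWithin] with x hx using rpow_pos_of_pos hx r

section Rescaling

variable {E : Type*} [NormedAddCommGroup E]

/-- The rescaling `s ↦ l ^ (-p) f(s / l)`, which fixes `‖·‖ ^ (-p)` when `l > 0`. In the notation
of the paper, `m_η = rescale γ (η ^ (1 / 3)) M`. -/
def rescale [NormedSpace ℝ E] (p l : ℝ) (f : E → ℝ) (s : E) : ℝ := l ^ (-p) * f (l⁻¹ • s)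

theorem rescale_rpow_third [NormedSpace ℝ E] {η : ℝ} (hη : 0 ≤ η) (γ : ℝ) (M : E → ℝ) :
    rescale γ (η ^ (1 / 3 : ℝ)) M = fun s ↦ η ^ (-γ / 3) * M (η ^ (-(1 : ℝ) / 3) • s) := by
  ext s
  rw [rescale, ← rpow_neg hη, ← rpow_mul hη]
  ring_nf

theorem tendsto_inv_smul_cobounded [NormedSpace ℝ E] {K : Set E} (hK : IsCompact K)
    (hK0 : K ⊆ {0}ᶜ) :
    Tendsto (fun q : ℝ × E ↦ q.1⁻¹ • q.2) (𝓝[>] 0 ×ˢ 𝓟 K) (cobounded E) := by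
  obtain ⟨r, hr, hrK⟩ := hK.exists_forall_le' (f := (‖·‖)) continuous_norm.continuousOn
    (a := 0) fun s hs ↦ norm_pos_iff.2 (hK0 hs)
  rw [← tendsto_norm_atTop_iff_cobounded]
  refine tendsto_atTop_mono' _ ?_ ((tendsto_inv_nhdsGT_zero.comp tendsto_fst).atTop_mul_const hr)
  refine eventually_prod_principal_iff.2 ?_
  filter_upwards [self_mem_nhdsWithin] with l (hl : 0 < l) s hs
  rw [norm_smul, Real.norm_of_nonneg (inv_nonneg.2 hl.le)]
  exact mul_le_mul_of_nonneg_left (hrK s hs) (inv_nonneg.2 hl.le)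

theorem eventuallyBoundedOnCompacts_rescale [NormedSpace ℝ E] {f : E → ℝ} {p : ℝ}
    (hf : f =O[cobounded E] (‖·‖ ^ (-p))) :
    EventuallyBoundedOnCompacts (fun l ↦ rescale p l f) (𝓝[>] 0) {0}ᶜ := fun K hK0 hK ↦ by
  have hscaled : (fun q : ℝ × E ↦ rescale p q.1 f q.2) =O[𝓝[>] 0 ×ˢ 𝓟 K]
      fun q ↦ q.1 ^ (-p) * ‖q.1⁻¹ • q.2‖ ^ (-p) :=
    (isBigO_refl _ _).mul (hf.comp_tendsto (tendsto_inv_smul_cobounded hK hK0))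
  have hinvariant : (fun q : ℝ × E ↦ q.1 ^ (-p) * ‖q.1⁻¹ • q.2‖ ^ (-p)) =ᶠ[𝓝[>] 0 ×ˢ 𝓟 K]
      fun q ↦ ‖q.2‖ ^ (-p) := by
    refine eventually_prod_principal_iff.2 ?_
    filter_upwards [self_mem_nhdsWithin] with l (hl : 0 < l) s _
    rw [← mul_rpow hl.le (norm_nonneg _), norm_smul, Real.norm_of_nonneg (inv_nonneg.2 hl.le),
      mul_inv_cancel_left₀ hl.ne']
  have hcont : ContinuousOn (fun s : E ↦ ‖s‖ ^ (-p)) {0}ᶜ :=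
    continuous_norm.continuousOn.rpow_const fun s hs ↦ .inl (norm_ne_zero_iff.2 hs)
  exact (hscaled.trans_eventuallyEq hinvariant).trans
    (EventuallyBoundedOnCompacts.of_continuousOn hcont K hK0 hK)

variable [InnerProductSpace ℝ E] [FiniteDimensional ℝ E]

theorem laplacian_rescale {f : E → ℝ} (hf : ContDiff ℝ 2 f) {p l : ℝ} (hl : 0 < l) :
    Δ (rescale p l f) = rescale (p + 2) l (Δ f) := by
  ext s
  have hcomp : ContDiff ℝ 2 fun s ↦ f (l⁻¹ • s) := hf.comp (contDiff_const_smul _)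
  change Δ (l ^ (-p) • fun s ↦ f (l⁻¹ • s)) s = l ^ (-(p + 2)) * Δ f (l⁻¹ • s)
  rw [InnerProductSpace.laplacian_smul _ hcomp.contDiffAt, laplacian_comp_const_smul hf,
    neg_add, rpow_add hl, rpow_neg hl.le 2, rpow_two]
  simp [mul_assoc]

theorem tendsto_sqH1Dist_rescale [MeasurableSpace E] [BorelSpace E] {μ : Measure E}
    [μ.IsAddHaarMeasure] {M m : E → ℝ} {γ : ℝ} {K : Set E} (hM : ContDiff ℝ 2 M)
    (hMdecay : M =O[cobounded E] (‖·‖ ^ (-γ)))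
    (hΔdecay : Δ M =O[cobounded E] (‖·‖ ^ (-(γ + 2)))) (hm : ContDiffOn ℝ 2 m {0}ᶜ)
    (hlim : ∀ s ≠ 0, Tendsto (rescale γ · M s) (𝓝[>] 0) (𝓝 (m s))) (hK : IsCompact K)
    (hK0 : K ⊆ {0}ᶜ) : Tendsto (fun l ↦ sqH1Dist μ K (rescale γ l M) m) (𝓝[>] 0) (𝓝 0) := by
  refine tendsto_sqH1Dist isOpen_compl_singleton hK0 hK
    (fun l ↦ (contDiff_const.mul (hM.comp (contDiff_const_smul l⁻¹))).contDiffOn) hm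
    (eventuallyBoundedOnCompacts_rescale hMdecay)
    ((eventuallyBoundedOnCompacts_rescale hΔdecay).congr ?_) hlim
  filter_upwards [self_mem_nhdsWithin] with l hl s _
  rw [laplacian_rescale hM hl]

end Rescaling

section Decay

variable {E : Type*} [NormedAddCommGroup E]

theorem isBigO_norm_rpow_neg_of_abs_le {f : E → ℝ} {C p q : ℝ} (hp : 0 ≤ p) (hpq : p ≤ q)
    (hf : ∀ v, |f v| ≤ C * √(1 + ‖v‖ ^ 2) ^ (-q)) : f =O[cobounded E] (‖·‖ ^ (-p)) := by
  have hjapanese : (fun v : E ↦ √(1 + ‖v‖ ^ 2) ^ (-q)) =O[cobounded E] (‖·‖ ^ (-p)) := by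
    refine .of_norm_eventuallyLE ?_
    filter_upwards [eventually_ne_cobounded 0] with v hv
    rw [Real.norm_of_nonneg (by positivity)]
    calc √(1 + ‖v‖ ^ 2) ^ (-q) ≤ √(1 + ‖v‖ ^ 2) ^ (-p) :=
          rpow_le_rpow_of_exponent_le (one_le_sqrt.2 (by simp)) (neg_le_neg hpq)
      _ ≤ ‖v‖ ^ (-p) := rpow_le_rpow_of_nonpos (norm_pos_iff.2 hv)
          (le_sqrt_of_sq_le (by simp)) (neg_nonpos.2 hp)
  refine (IsBigO.of_bound C (.of_forall fun v ↦ ?_)).trans hjapanese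
  rw [Real.norm_eq_abs, Real.norm_of_nonneg (by positivity)]
  exact hf v

theorem isBigO_norm_rpow_neg_of_div {f g : E → ℝ} {p q : ℝ} (hf0 : ∀ v, f v ≠ 0)
    (hf : f =O[cobounded E] (‖·‖ ^ (-p))) (hgf : (g / f) =O[cobounded E] (‖·‖ ^ (-q))) :
    g =O[cobounded E] (‖·‖ ^ (-(p + q))) := by
  refine (hf.mul hgf).congr' (.of_forall fun v ↦ mul_div_cancel₀ (g v) (hf0 v)) ?_
  filter_upwards [eventually_ne_cobounded 0] with v hv
  rw [neg_add, rpow_add (norm_pos_iff.2 hv)]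

end Decay

theorem rescaled_equilibrium_H1_convergence_general {E : Type*} [NormedAddCommGroup E]
    [InnerProductSpace ℝ E] [FiniteDimensional ℝ E] [MeasurableSpace E] [BorelSpace E]
    (μ : Measure E) [μ.IsAddHaarMeasure] {M m : E → ℝ} {γ : ℝ} {Ω : Set E} (hM : ContDiff ℝ 2 M)
    (hMdecay : M =O[cobounded E] (‖·‖ ^ (-γ)))
    (hΔdecay : Δ M =O[cobounded E] (‖·‖ ^ (-(γ + 2)))) (hm : ContDiffOn ℝ 2 m {0}ᶜ)
    (hlim : ∀ s ≠ 0, Tendsto (fun l : ℝ ↦ l ^ (-γ) * M (l⁻¹ • s)) (𝓝[>] 0) (𝓝 (m s)))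
    (hΩ : IsCompact Ω) (hΩ0 : Ω ⊆ {0}ᶜ) :
    Tendsto (fun η : ℝ ↦ ∫ s in Ω,
        ((η ^ (-γ / 3) * M (η ^ (-(1 : ℝ) / 3) • s) - m s) ^ 2 +
          ‖fderiv ℝ (fun w ↦ η ^ (-γ / 3) * M (η ^ (-(1 : ℝ) / 3) • w)) s - fderiv ℝ m s‖ ^ 2) ∂μ)
      (𝓝[>] 0) (𝓝 0) := by
  refine ((tendsto_sqH1Dist_rescale (μ := μ) hM hMdecay hΔdecay hm hlim hΩ hΩ0).comp
    (tendsto_rpow_nhdsGT_zero (r := 1 / 3) (by norm_num))).congr' ?_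
  filter_upwards [self_mem_nhdsWithin] with η hη
  rw [Function.comp_apply, rescale_rpow_third (le_of_lt hη), sqH1Dist]

/-- **`H¹`-convergence of the rescaled equilibrium on compact sets away from the origin**
(Lemma 3.10 of the paper): under (A1), (A3) and (A5), the rescaled equilibrium
`m_η(s) := η^{-γ/3} M(η^{-1/3} s)` converges to `m` in `H¹(Ω)` for every compact
`Ω ⊂ ℝ^d ∖ {0}`. -/
theorem rescaled_equilibrium_H1_convergence (d : ℕ) (hd : 1 ≤ d) (γ C₁ C₂ σ C : ℝ)
    (hγ : (d : ℝ) / 2 < γ) (hC₁ : 0 < C₁) (hC₁₂ : C₁ ≤ C₂) (hσ : 2 ≤ σ) (hC : 0 < C)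
    (M : EuclideanSpace ℝ (Fin d) → ℝ) (hMpos : ∀ v, 0 < M v) (hM : ContDiff ℝ 2 M)
    (hA1 : ∀ v, C₁ * Real.sqrt (1 + ‖v‖ ^ 2) ^ (-γ) ≤ M v ∧
              M v ≤ C₂ * Real.sqrt (1 + ‖v‖ ^ 2) ^ (-γ))
    (hA5 : ∀ v, |lap M v / M v| ≤ C * Real.sqrt (1 + ‖v‖ ^ 2) ^ (-σ))
    (m : EuclideanSpace ℝ (Fin d) → ℝ)
    (hm : ContDiffOn ℝ 2 m {(0 : EuclideanSpace ℝ (Fin d))}ᶜ)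
    (hA3 : ∀ s : EuclideanSpace ℝ (Fin d), s ≠ 0 →
      Tendsto (fun l : ℝ => l ^ (-γ) * M (l⁻¹ • s)) (nhdsWithin 0 (Set.Ioi 0))
        (nhds (m s))) :
    ∀ Ω : Set (EuclideanSpace ℝ (Fin d)), IsCompact Ω →
      Ω ⊆ {(0 : EuclideanSpace ℝ (Fin d))}ᶜ →
      Tendsto (fun η : ℝ => ∫ s in Ω,
          ((η ^ (-γ / 3) * M ((η ^ (-(1 : ℝ) / 3)) • s) - m s) ^ 2 +
            ‖fderiv ℝ (fun w => η ^ (-γ / 3) * M ((η ^ (-(1 : ℝ) / 3)) • w)) s -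
              fderiv ℝ m s‖ ^ 2))
        (nhdsWithin 0 (Set.Ioi 0)) (nhds 0) := by
  have hγ0 : 0 ≤ γ := (by positivity : (0 : ℝ) ≤ d / 2).trans hγ.le
  have hMdecay := isBigO_norm_rpow_neg_of_abs_le hγ0 le_rfl
    fun v ↦ (abs_of_pos (hMpos v)).trans_le (hA1 v).2
  have hratio : (lap M / M) =O[cobounded _] (‖·‖ ^ (-(2 : ℝ))) :=
    isBigO_norm_rpow_neg_of_abs_le zero_le_two hσ hA5
  rw [lap_eq_laplacian hM] at hratio
  have hΔdecay := isBigO_norm_rpow_neg_of_div (fun v ↦ (hMpos v).ne') hMdecay hratio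
  exact fun Ω ↦ rescaled_equilibrium_H1_convergence_general volume hM hMdecay hΔdecay hm hA3
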